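/- In the dihedral group D_n = ⟨r,s | r^n = s^2 = rsrs = e⟩ with n ≥ 3, Player 1 has a winning strategy for REL(D_n, {r,s}) if n is odd or n ≡ 2 (mod 6), and Player 2 has a winning strategy if n is even and n ≢ 2 (mod 6). -/

import Mathlib

namespace RelatorGames

variable {G : Type*} [Group G]

/-- The letters available in the relator games: elements of `S` and their inverses. -/
def letters (S : Set G) : Set G := S ∪ (fun g => g⁻¹) '' S

/-- Evaluate a history of moves (most recent letter first) to a group element:
the group element represented by the word built so far. -/
def eval (h : List G) : G := h.reverse.prod

/-- A move `m` is legal after history `h`: it is a letter of `S ∪ S⁻¹` and it is not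
the inverse of the immediately preceding letter (no backtracking). -/
def LegalMove (S : Set G) (h : List G) (m : G) : Prop :=
  m ∈ letters S ∧ ∀ p ∈ h.head?, m ≠ p⁻¹

/-- Appending `m` to the history `h` produces a word equal in `G` to some earlier
prefix of the word (equivalently, the walk in the Cayley graph revisits a vertex). -/
def ClosesCycle (h : List G) (m : G) : Prop :=
  ∃ t, t <:+ h ∧ eval t = eval (m :: h)

/-- A strategy: a choice of next letter given the history (most recent letter first). -/
abbrev Strategy (G : Type*) := List G → G

/-- The sequence of histories arising when the first player (moving at even steps)
uses `σ` and the second player (moving at odd steps) uses `τ`. -/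
def hist (σ τ : Strategy G) : ℕ → List G
  | 0 => []
  | k + 1 =>
      (if k % 2 = 0 then σ (hist σ τ k) else τ (hist σ τ k)) :: hist σ τ k

/-- The move made at step `k` in the play of `σ` against `τ`. -/
def moveAt (σ τ : Strategy G) (k : ℕ) : G :=
  if k % 2 = 0 then σ (hist σ τ k) else τ (hist σ τ k)

/-- Step `j` is uneventful: the move made is legal and does not close a cycle. -/
def Ok (S : Set G) (σ τ : Strategy G) (j : ℕ) : Prop :=
  LegalMove S (hist σ τ j) (moveAt σ τ j) ∧ ¬ ClosesCycle (hist σ τ j) (moveAt σ τ j)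

/-- In the play of `σ` against `τ`, the player moving at steps congruent to `p` mod 2
wins the relator achievement game `REL(G,S)`: at the first eventful step, either it is
that player's turn and they legally close a cycle, or it is the opponent's turn and the
opponent has made an illegal move (in particular, has no legal move). -/
def RelWins (S : Set G) (p : ℕ) (σ τ : Strategy G) : Prop :=
  ∃ k : ℕ, (∀ j < k, Ok S σ τ j) ∧
    ((k % 2 = p ∧ LegalMove S (hist σ τ k) (moveAt σ τ k) ∧
        ClosesCycle (hist σ τ k) (moveAt σ τ k)) ∨
      (k % 2 ≠ p ∧ ¬ LegalMove S (hist σ τ k) (moveAt σ τ k)))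

/-- In the play of `σ` against `τ`, the player moving at steps congruent to `p` mod 2
wins the relator avoidance game `RAV(G,S)`: at the first eventful step it is the
opponent's turn, and the opponent either makes an illegal move (in particular, has no
legal move) or closes a cycle. -/
def RavWins (S : Set G) (p : ℕ) (σ τ : Strategy G) : Prop :=
  ∃ k : ℕ, (∀ j < k, Ok S σ τ j) ∧ k % 2 ≠ p ∧
    (¬ LegalMove S (hist σ τ k) (moveAt σ τ k) ∨ ClosesCycle (hist σ τ k) (moveAt σ τ k))

/-- Player 1 has a winning strategy for `REL(G,S)`. -/
def FirstWinsREL (S : Set G) : Prop :=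
  ∃ σ : Strategy G, ∀ τ : Strategy G, RelWins S 0 σ τ

/-- Player 2 has a winning strategy for `REL(G,S)`. -/
def SecondWinsREL (S : Set G) : Prop :=
  ∃ τ : Strategy G, ∀ σ : Strategy G, RelWins S 1 σ τ

/-- Player 1 has a winning strategy for `RAV(G,S)`. -/
def FirstWinsRAV (S : Set G) : Prop :=
  ∃ σ : Strategy G, ∀ τ : Strategy G, RavWins S 0 σ τ

/-- Player 2 has a winning strategy for `RAV(G,S)`. -/
def SecondWinsRAV (S : Set G) : Prop :=
  ∃ τ : Strategy G, ∀ σ : Strategy G, RavWins S 1 σ τ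

end RelatorGames

/-!
The Cayley graph of `Dₙ` is a prism: two `n`-cycles joined by `n` rungs, and up to reflection the
walk runs around it in one direction. Turning back right after a crossing, or crossing two
neighbouring rungs in succession, lets the opponent close a 4-cycle, so the only real decision is
when to cross.

If the first move is a rotation, then column `0` is visited on one ring only, and whoever enters it
on the other ring loses. The winner always rotates forward; this keeps the parity of `n` plus the
current column plus the current ring, which decides who has to enter it.

If the first move is `s`, then both vertices of column `0` are visited and whoever enters it wins.
The winner steers by the number of columns ahead modulo `3`: until a cycle can be closed, it crosses
when this number is `1` modulo `3` and rotates otherwise.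

In both cases the winner keeps the opponent in a set of positions closed under one round of play.
Since the group is finite, no play avoids closing a cycle forever, so this suffices.
-/

namespace RelatorGames

section Plays

variable {G : Type*}

lemma hist_succ (σ τ : Strategy G) (k : ℕ) :
    hist σ τ (k + 1) = moveAt σ τ k :: hist σ τ k := rfl

lemma hist_suffix_hist (σ τ : Strategy G) {j k : ℕ} (hjk : j ≤ k) :
    hist σ τ j <:+ hist σ τ k := by
  induction k, hjk using Nat.le_induction with
  | base => exact List.suffix_rfl
  | succ k _ ih => exact ih.trans (List.suffix_cons _ _)

end Plays

section Traps

variable {G : Type*} [Group G] {S : Set G} {L L' : List G → Prop} {h : List G} {σ τ : Strategy G}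

/-- The player to move after `h` can either close a cycle or reach a position in `L`. -/
def WinsInto (S : Set G) (L : List G → Prop) (h : List G) : Prop :=
  ∃ m, LegalMove S h m ∧ (ClosesCycle h m ∨ L (m :: h))

/-- Whatever the player to move after `h` does, no cycle is closed and the opponent can then
either close one or reach a position in `L`. -/
def LosesInto (S : Set G) (L : List G → Prop) (h : List G) : Prop :=
  ∀ m, LegalMove S h m → ¬ ClosesCycle h m ∧ WinsInto S L (m :: h)

/-- A set of positions in which the opponent of the player to move can keep that player, round
after round, until winning. -/
def IsTrap (S : Set G) (L : List G → Prop) : Prop :=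
  ∀ h, L h → LosesInto S L h

lemma WinsInto.mono (hLL' : ∀ h, L h → L' h) (hw : WinsInto S L h) : WinsInto S L' h :=
  let ⟨m, hm, hcl⟩ := hw
  ⟨m, hm, hcl.imp_right (hLL' _)⟩

lemma LosesInto.mono (hLL' : ∀ h, L h → L' h) (hl : LosesInto S L h) : LosesInto S L' h :=
  fun m hm => ⟨(hl m hm).1, (hl m hm).2.mono hLL'⟩

lemma IsTrap.or (hL : IsTrap S L) (hL' : IsTrap S L') : IsTrap S fun h => L h ∨ L' h := by
  rintro h (hh | hh)
  · exact (hL h hh).mono fun _ => Or.inl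
  · exact (hL' h hh).mono fun _ => Or.inr

lemma exists_strategy_of_winsInto (S : Set G) (L : List G → Prop) :
    ∃ σ : Strategy G, ∀ h, WinsInto S L h →
      LegalMove S h (σ h) ∧ (ClosesCycle h (σ h) ∨ L (σ h :: h)) := by
  classical
  exact ⟨fun h => if hw : WinsInto S L h then hw.choose else 1,
    fun h hw => by simpa only [dif_pos hw] using hw.choose_spec⟩

lemma exists_not_ok [Finite G] (S : Set G) (σ τ : Strategy G) : ∃ k, ¬ Ok S σ τ k := by
  by_contra! hok
  have hne : ∀ j k, j < k → eval (hist σ τ j) ≠ eval (hist σ τ k)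
    | j, k + 1, hjk, heq => (hok k).2 ⟨_, hist_suffix_hist σ τ (Nat.le_of_lt_succ hjk), heq⟩
  refine not_injective_infinite_finite (fun k => eval (hist σ τ k)) fun j k heq => ?_
  rcases lt_trichotomy j k with hjk | hjk | hjk
  · exact (hne j k hjk heq).elim
  · exact hjk
  · exact (hne k j hjk heq.symm).elim

theorem relWins_of_isTrap [Finite G] (hL : IsTrap S L) {p : ℕ} (hp : p < 2)
    (hmove : ∀ k, k % 2 = p → WinsInto S L (hist σ τ k) →
      LegalMove S (hist σ τ k) (moveAt σ τ k) ∧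
        (ClosesCycle (hist σ τ k) (moveAt σ τ k) ∨ L (hist σ τ (k + 1))))
    (hfirst : p = 0 → WinsInto S L []) (hsecond : p = 1 → LosesInto S L []) :
    RelWins S p σ τ := by
  classical
  obtain ⟨k, hk, hok⟩ : ∃ k, ¬ Ok S σ τ k ∧ ∀ j < k, Ok S σ τ j :=
    have hex := exists_not_ok S σ τ
    ⟨Nat.find hex, Nat.find_spec hex, fun _ hj => not_not.1 (Nat.find_min hex hj)⟩
  have hpos : ∀ j ≤ k, (j % 2 = p → WinsInto S L (hist σ τ j)) ∧
      (j % 2 ≠ p → LosesInto S L (hist σ τ j)) := by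
    intro j hj
    induction j with
    | zero => exact ⟨fun h => hfirst h.symm, fun h => hsecond (by omega)⟩
    | succ j ih =>
      obtain ⟨hwin, hlose⟩ := ih (by omega)
      have hokj := hok j hj
      refine ⟨fun h => (hlose (by omega) _ hokj.1).2, fun h => ?_⟩
      have hj' : j % 2 = p := by omega
      exact hL _ ((hmove j hj' (hwin hj')).2.resolve_left hokj.2)
  refine ⟨k, hok, ?_⟩
  by_cases hkp : k % 2 = p
  · obtain ⟨hlegal, -⟩ := hmove k hkp ((hpos k le_rfl).1 hkp)
    exact Or.inl ⟨hkp, hlegal, not_not.1 fun hcl => hk ⟨hlegal, hcl⟩⟩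
  · exact Or.inr ⟨hkp, fun hlegal => hk ⟨hlegal, ((hpos k le_rfl).2 hkp _ hlegal).1⟩⟩

theorem firstWinsREL_of_winsInto [Finite G] (hL : IsTrap S L) (hw : WinsInto S L []) :
    FirstWinsREL S := by
  obtain ⟨σ, hσ⟩ := exists_strategy_of_winsInto S L
  refine ⟨σ, fun τ => relWins_of_isTrap hL two_pos (fun k hk hwk => ?_) (fun _ => hw) (by simp)⟩
  simpa [hist_succ, moveAt, hk] using hσ _ hwk

theorem secondWinsREL_of_losesInto [Finite G] (hL : IsTrap S L) (hl : LosesInto S L []) :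
    SecondWinsREL S := by
  obtain ⟨τ, hτ⟩ := exists_strategy_of_winsInto S L
  refine ⟨τ, fun σ => relWins_of_isTrap hL one_lt_two (fun k hk hwk => ?_) (by simp) fun _ => hl⟩
  simpa [hist_succ, moveAt, hk] using hτ _ hwk

end Traps

section Visited

variable {G : Type*} [Group G] {S : Set G} {h : List G} {m p v : G}

/-- The vertices of the Cayley graph that the walk `h` has visited, including its endpoint. -/
def visited (h : List G) : Set G := {v | ∃ t, t <:+ h ∧ eval t = v}

lemma eval_nil : eval ([] : List G) = 1 := rfl

lemma eval_cons (m : G) (h : List G) : eval (m :: h) = eval h * m := by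
  simp [eval]

lemma visited_nil : visited ([] : List G) = {1} := by
  ext v
  simp [visited, eval_nil, eq_comm]

lemma visited_cons (m : G) (h : List G) :
    visited (m :: h) = insert (eval (m :: h)) (visited h) := by
  ext v
  simp only [visited, List.suffix_cons_iff, Set.mem_ofPred_eq, Set.mem_insert_iff, or_and_right,
    exists_or, exists_eq_left, eq_comm]

lemma eval_mem_visited (h : List G) : eval h ∈ visited h := ⟨h, List.suffix_rfl, rfl⟩

lemma one_mem_visited (h : List G) : 1 ∈ visited h := ⟨[], List.nil_suffix, eval_nil⟩

lemma mem_visited_cons_of_mem (hv : v ∈ visited h) : v ∈ visited (m :: h) :=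
  visited_cons m h ▸ Set.mem_insert_of_mem _ hv

lemma closesCycle_iff_eval_mem_visited : ClosesCycle h m ↔ eval (m :: h) ∈ visited h := Iff.rfl

lemma legalMove_iff_of_head?_eq (hp : h.head? = some p) :
    LegalMove S h m ↔ m ∈ letters S ∧ m ≠ p⁻¹ := by
  simp [LegalMove, hp]

end Visited
section Prism

open DihedralGroup

variable {n : ℕ} {ε : ℤˣ} {b b' : Bool} {c c' : ℕ} {m : DihedralGroup n}
  {h : List (DihedralGroup n)}

/-- The generators `r` and `s` of the game. -/
abbrev gens (n : ℕ) : Set (DihedralGroup n) := {r 1, sr 0}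

/-- The vertex of the prism in column `c` of the ring of rotations (`b = false`) or of reflections
(`b = true`). The sign `ε` is the direction in which columns are counted, and `c` matters only
modulo `n`. -/
def vertex (ε : ℤˣ) (c : ℕ) (b : Bool) : DihedralGroup n :=
  if b then sr (-((ε : ℤ) * c)) else r ((ε : ℤ) * c)

/-- The letter that leads to the next column in the direction `ε` from a vertex of the ring `b`. -/
def forward (ε : ℤˣ) (b : Bool) : DihedralGroup n :=
  if b then r (-(ε : ℤ)) else r (ε : ℤ)

lemma vertex_zero_false : vertex ε 0 false = (1 : DihedralGroup n) := by
  simp [vertex]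

lemma vertex_self : (vertex ε n b : DihedralGroup n) = vertex ε 0 b := by
  cases b <;> simp [vertex]

lemma vertex_inj (hc : c < n) (hc' : c' < n) :
    (vertex ε c b : DihedralGroup n) = vertex ε c' b' ↔ c = c' ∧ b = b' := by
  have hcast : (c : ZMod n) = c' ↔ c = c' := by
    rw [ZMod.natCast_eq_natCast_iff', Nat.mod_eq_of_lt hc, Nat.mod_eq_of_lt hc']
  rcases Int.units_eq_one_or ε with rfl | rfl <;> cases b <;> cases b' <;> simp [vertex, hcast]

lemma vertex_mul_forward :
    (vertex ε c b : DihedralGroup n) * forward ε b = vertex ε (c + 1) b := by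
  cases b <;> simp [vertex, forward, mul_add, add_comm]

lemma vertex_mul_forward_neg :
    (vertex ε (c + 1) b : DihedralGroup n) * forward (-ε) b = vertex ε c b := by
  cases b <;> simp [vertex, forward, mul_add, add_comm]

lemma vertex_mul_sr_zero : (vertex ε c b : DihedralGroup n) * sr 0 = vertex ε c (!b) := by
  cases b <;> simp [vertex]

lemma forward_inv : (forward ε b : DihedralGroup n)⁻¹ = forward (-ε) b := by
  cases b <;> simp [forward]

lemma forward_ne_sr_zero : forward ε b ≠ (sr 0 : DihedralGroup n) := by
  cases b <;> simp [forward]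

lemma forward_ne_forward_neg (hn : 3 ≤ n) :
    (forward ε b : DihedralGroup n) ≠ forward (-ε) b := by
  have : Fact (2 < n) := ⟨hn⟩
  have hne : (-1 : ZMod n) ≠ 1 := ZMod.neg_one_ne_one
  rcases Int.units_eq_one_or ε with rfl | rfl <;> cases b <;> simp [forward, hne, hne.symm]

lemma mem_letters_gens (ε : ℤˣ) (b : Bool) :
    m ∈ letters (gens n) ↔ m = forward ε b ∨ m = forward (-ε) b ∨ m = sr 0 := by
  have hletters : m ∈ letters (gens n) ↔ m = r 1 ∨ m = r (-1) ∨ m = sr 0 := by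
    simp only [letters, Set.mem_union, Set.mem_insert_iff, Set.mem_singleton_iff, Set.image_pair,
      inv_r, inv_sr]
    tauto
  rw [hletters]
  rcases Int.units_eq_one_or ε with rfl | rfl <;> cases b <;> simp [forward, or_left_comm]

lemma legalMove_nil_iff (ε : ℤˣ) (b : Bool) :
    LegalMove (gens n) [] m ↔ m = forward ε b ∨ m = forward (-ε) b ∨ m = sr 0 := by
  simp [LegalMove, mem_letters_gens ε b]

lemma legalMove_iff_of_head?_eq_forward (hn : 3 ≤ n) (hd : h.head? = some (forward ε b)) :
    LegalMove (gens n) h m ↔ m = forward ε b ∨ m = sr 0 := by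
  rw [legalMove_iff_of_head?_eq hd, mem_letters_gens ε b, forward_inv]
  have hforward := forward_ne_forward_neg (ε := ε) (b := b) hn
  have hsr := forward_ne_sr_zero (n := n) (ε := -ε) (b := b)
  grind

lemma legalMove_iff_of_head?_eq_sr_zero (ε : ℤˣ) (b : Bool) (hd : h.head? = some (sr 0)) :
    LegalMove (gens n) h m ↔ m = forward ε b ∨ m = forward (-ε) b := by
  rw [legalMove_iff_of_head?_eq hd, mem_letters_gens ε b, inv_sr]
  have hforward := forward_ne_sr_zero (n := n) (ε := ε) (b := b)
  have hneg := forward_ne_sr_zero (n := n) (ε := -ε) (b := b)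
  grind

lemma vertex_zero_mem_visited (h₀ : vertex ε 0 true ∈ visited h) (b : Bool) :
    vertex ε 0 b ∈ visited h := by
  cases b
  · exact vertex_zero_false (ε := ε) ▸ one_mem_visited h
  · exact h₀

lemma vertex_mem_visited_cons (hm : eval (m :: h) = vertex ε c b) (hc : c < n) (hc' : c' < n) :
    vertex ε c' b' ∈ visited (m :: h) ↔ c' = c ∧ b' = b ∨ vertex ε c' b' ∈ visited h := by
  rw [visited_cons, Set.mem_insert_iff, hm, vertex_inj hc' hc]

/-- The walk `h` ends in column `c + 1`, on the ring `b`, and has not visited any column beyond. -/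
structure AtFrontier (ε : ℤˣ) (c : ℕ) (b : Bool) (h : List (DihedralGroup n)) : Prop where
  lt : c + 1 < n
  eval_eq : eval h = vertex ε (c + 1) b
  unvisited : ∀ c' b', c + 1 < c' → c' < n → vertex ε c' b' ∉ visited h

/-- The walk `h` has just entered column `c + 1` by a forward rotation on the ring `b`. -/
structure JustRotated (ε : ℤˣ) (c : ℕ) (b : Bool) (h : List (DihedralGroup n)) : Prop
    extends AtFrontier ε c b h where
  head?_eq : h.head? = some (forward ε b)
  behind : vertex ε c b ∈ visited h
  across : vertex ε (c + 1) (!b) ∉ visited h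

/-- The walk `h` has just crossed to the ring `b` in column `c + 1`, which it had entered by a
forward rotation from a column `c` whose vertex on the ring `b` is unvisited. -/
structure JustCrossed (ε : ℤˣ) (c : ℕ) (b : Bool) (h : List (DihedralGroup n)) : Prop
    extends AtFrontier ε c b h where
  head?_eq : h.head? = some (sr 0)
  behind : vertex ε c b ∉ visited h
  across : vertex ε (c + 1) (!b) ∈ visited h
  diagonal : vertex ε c (!b) ∈ visited h

namespace AtFrontier

lemma eval_forward (H : AtFrontier ε c b h) :
    eval (forward ε b :: h) = vertex ε (c + 2) b := by
  rw [eval_cons, H.eval_eq, vertex_mul_forward]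

lemma eval_backward (H : AtFrontier ε c b h) :
    eval (forward (-ε) b :: h) = vertex ε c b := by
  rw [eval_cons, H.eval_eq, vertex_mul_forward_neg]

lemma eval_cross (H : AtFrontier ε c b h) :
    eval (sr 0 :: h) = vertex ε (c + 1) (!b) := by
  rw [eval_cons, H.eval_eq, vertex_mul_sr_zero]

lemma eval_forward_of_last (H : AtFrontier ε c b h) (hc : c + 2 = n) :
    eval (forward ε b :: h) = vertex ε 0 b := by
  rw [H.eval_forward, hc, vertex_self]

lemma cons (H : AtFrontier ε c b h) (hcc' : c ≤ c') (hc' : c' + 1 < n)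
    (hm : eval (m :: h) = vertex ε (c' + 1) b') : AtFrontier ε c' b' (m :: h) where
  lt := hc'
  eval_eq := hm
  unvisited k a hk hkn := by
    rw [vertex_mem_visited_cons hm hc' hkn]
    rintro (⟨rfl, -⟩ | hmem)
    · omega
    · exact H.unvisited k a (by omega) hkn hmem

lemma not_mem_visited_forward (H : AtFrontier ε c b h) (hc : c + 2 < n)
    (hc' : c' < n) (hne : c' ≠ c + 2 ∨ b' ≠ b) (hv : vertex ε c' b' ∉ visited h) :
    vertex ε c' b' ∉ visited (forward ε b :: h) := by
  rw [vertex_mem_visited_cons H.eval_forward hc hc']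
  tauto

lemma not_closesCycle_forward (H : AtFrontier ε c b h) (hc : c + 2 < n) :
    ¬ ClosesCycle h (forward ε b) := by
  rw [closesCycle_iff_eval_mem_visited, H.eval_forward]
  exact H.unvisited _ _ (by omega) hc

lemma closesCycle_forward_of_last (H : AtFrontier ε c b h) (hc : c + 2 = n)
    (h₀ : vertex ε 0 b ∈ visited h) : ClosesCycle h (forward ε b) := by
  rwa [closesCycle_iff_eval_mem_visited, H.eval_forward_of_last hc]

lemma start_not_mem_visited_cross (H : AtFrontier ε c b h) (h₀ : vertex ε 0 true ∉ visited h) :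
    vertex ε 0 true ∉ visited (sr 0 :: h) := by
  rw [vertex_mem_visited_cons H.eval_cross H.lt (by have := H.lt; omega)]
  simpa using h₀

end AtFrontier

namespace JustRotated

lemma legalMove_iff (H : JustRotated ε c b h) (hn : 3 ≤ n) :
    LegalMove (gens n) h m ↔ m = forward ε b ∨ m = sr 0 :=
  legalMove_iff_of_head?_eq_forward hn H.head?_eq

lemma not_closesCycle_cross (H : JustRotated ε c b h) : ¬ ClosesCycle h (sr 0) := by
  rw [closesCycle_iff_eval_mem_visited, H.eval_cross]
  exact H.across

lemma rotate (H : JustRotated ε c b h) (hc : c + 2 < n) :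
    JustRotated ε (c + 1) b (forward ε b :: h) where
  toAtFrontier := H.cons (Nat.le_succ c) hc H.eval_forward
  head?_eq := rfl
  behind := mem_visited_cons_of_mem (H.eval_eq ▸ eval_mem_visited h)
  across := H.not_mem_visited_forward hc hc (by simp) (H.unvisited _ _ (by omega) hc)

lemma diagonal_rotate (H : JustRotated ε c b h) (hc : c + 2 < n) :
    vertex ε (c + 1) (!b) ∉ visited (forward ε b :: h) :=
  H.not_mem_visited_forward hc (by omega) (by simp) H.across

lemma cross (H : JustRotated ε c b h) (hdiag : vertex ε c (!b) ∉ visited h) :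
    JustCrossed ε c (!b) (sr 0 :: h) where
  toAtFrontier := H.cons le_rfl H.lt H.eval_cross
  head?_eq := rfl
  behind := by
    rw [vertex_mem_visited_cons H.eval_cross H.lt (by have := H.lt; omega)]
    simpa using hdiag
  across := by
    rw [Bool.not_not, ← H.eval_eq]
    exact mem_visited_cons_of_mem (eval_mem_visited h)
  diagonal := by
    rw [Bool.not_not]
    exact mem_visited_cons_of_mem H.behind

lemma winsInto_cross (H : JustRotated ε c b h) (L : List (DihedralGroup n) → Prop)
    (hdiag : vertex ε c (!b) ∈ visited h) : WinsInto (gens n) L (sr 0 :: h) := by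
  refine ⟨forward (-ε) (!b), (legalMove_iff_of_head?_eq_sr_zero ε (!b) rfl).2 (Or.inr rfl),
    Or.inl ?_⟩
  rw [closesCycle_iff_eval_mem_visited, eval_cons, H.eval_cross, vertex_mul_forward_neg]
  exact mem_visited_cons_of_mem hdiag

end JustRotated

namespace JustCrossed

lemma legalMove_iff (H : JustCrossed ε c b h) :
    LegalMove (gens n) h m ↔ m = forward ε b ∨ m = forward (-ε) b :=
  legalMove_iff_of_head?_eq_sr_zero ε b H.head?_eq

lemma not_closesCycle_backward (H : JustCrossed ε c b h) :
    ¬ ClosesCycle h (forward (-ε) b) := by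
  rw [closesCycle_iff_eval_mem_visited, H.eval_backward]
  exact H.behind

lemma rotate (H : JustCrossed ε c b h) (hc : c + 2 < n) :
    JustRotated ε (c + 1) b (forward ε b :: h) where
  toAtFrontier := H.cons (Nat.le_succ c) hc H.eval_forward
  head?_eq := rfl
  behind := mem_visited_cons_of_mem (H.eval_eq ▸ eval_mem_visited h)
  across := H.not_mem_visited_forward hc hc (by simp) (H.unvisited _ _ (by omega) hc)

lemma diagonal_rotate (H : JustCrossed ε c b h) :
    vertex ε (c + 1) (!b) ∈ visited (forward ε b :: h) :=
  mem_visited_cons_of_mem H.across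

lemma winsInto_backward (H : JustCrossed ε c b h) (hn : 3 ≤ n)
    (L : List (DihedralGroup n) → Prop) : WinsInto (gens n) L (forward (-ε) b :: h) := by
  refine ⟨sr 0, (legalMove_iff_of_head?_eq_forward hn rfl).2 (Or.inr rfl), Or.inl ?_⟩
  rw [closesCycle_iff_eval_mem_visited, eval_cons, H.eval_backward, vertex_mul_sr_zero]
  exact mem_visited_cons_of_mem H.diagonal

end JustCrossed

lemma vertex_mem_visited_nil (hc : c < n) :
    (vertex ε c b : DihedralGroup n) ∈ visited [] ↔ c = 0 ∧ b = false := by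
  rw [visited_nil, Set.mem_singleton_iff, ← vertex_zero_false (ε := ε),
    vertex_inj hc (Nat.zero_lt_of_lt hc)]

lemma eval_forward_singleton : eval [(forward ε false : DihedralGroup n)] = vertex ε 1 false := by
  rw [eval_cons, eval_nil, ← vertex_zero_false (ε := ε), vertex_mul_forward]

lemma eval_sr_zero_singleton (ε : ℤˣ) : eval [(sr 0 : DihedralGroup n)] = vertex ε 0 true := by
  rw [eval_cons, eval_nil, ← vertex_zero_false (ε := ε), vertex_mul_sr_zero, Bool.not_false]

lemma eval_forward_sr_zero :
    eval [(forward ε true : DihedralGroup n), sr 0] = vertex ε 1 true := by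
  rw [eval_cons, eval_sr_zero_singleton ε, vertex_mul_forward]

lemma vertex_mem_visited_forward_singleton (hn : 1 < n) (hc : c < n) :
    vertex ε c b ∈ visited [(forward ε false : DihedralGroup n)] ↔ c ≤ 1 ∧ b = false := by
  rw [vertex_mem_visited_cons eval_forward_singleton hn hc, vertex_mem_visited_nil hc]
  grind

lemma vertex_mem_visited_sr_zero_singleton (hc : c < n) :
    vertex ε c b ∈ visited [(sr 0 : DihedralGroup n)] ↔ c = 0 := by
  rw [vertex_mem_visited_cons (eval_sr_zero_singleton ε) (Nat.zero_lt_of_lt hc) hc,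
    vertex_mem_visited_nil hc]
  cases b <;> simp

lemma vertex_mem_visited_forward_sr_zero (hn : 1 < n) (hc : c < n) :
    vertex ε c b ∈ visited [(forward ε true : DihedralGroup n), sr 0] ↔
      c = 0 ∨ c = 1 ∧ b = true := by
  rw [vertex_mem_visited_cons eval_forward_sr_zero hn hc, vertex_mem_visited_sr_zero_singleton hc,
    or_comm]

lemma not_closesCycle_nil_forward (hn : 1 < n) :
    ¬ ClosesCycle [] (forward ε false : DihedralGroup n) := by
  rw [closesCycle_iff_eval_mem_visited, eval_forward_singleton, vertex_mem_visited_nil hn]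
  simp

lemma not_closesCycle_nil_sr_zero : ¬ ClosesCycle [] (sr 0 : DihedralGroup n) := by
  rw [closesCycle_iff_eval_mem_visited, visited_nil, eval_cons, eval_nil, one_mul]
  nofun

lemma not_closesCycle_sr_zero_forward (hn : 1 < n) :
    ¬ ClosesCycle [sr 0] (forward ε true : DihedralGroup n) := by
  rw [closesCycle_iff_eval_mem_visited, eval_forward_sr_zero,
    vertex_mem_visited_sr_zero_singleton hn]
  simp

lemma justRotated_forward_singleton (hn : 1 < n) :
    JustRotated ε 0 false [(forward ε false : DihedralGroup n)] where
  lt := hn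
  eval_eq := eval_forward_singleton
  unvisited c b hc hcn := by
    rw [vertex_mem_visited_forward_singleton hn hcn]
    omega
  head?_eq := rfl
  behind := by simp [vertex_mem_visited_forward_singleton hn (Nat.zero_lt_of_lt hn)]
  across := by simp [vertex_mem_visited_forward_singleton hn hn]

lemma justRotated_forward_sr_zero (hn : 1 < n) :
    JustRotated ε 0 true [(forward ε true : DihedralGroup n), sr 0] where
  lt := hn
  eval_eq := eval_forward_sr_zero
  unvisited c b hc hcn := by
    rw [vertex_mem_visited_forward_sr_zero hn hcn]
    omega
  head?_eq := rfl
  behind := by simp [vertex_mem_visited_forward_sr_zero hn (Nat.zero_lt_of_lt hn)]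
  across := by simp [vertex_mem_visited_forward_sr_zero hn hn]

lemma start_mem_visited_forward_sr_zero (hn : 1 < n) :
    vertex ε 0 b ∈ visited [(forward ε true : DihedralGroup n), sr 0] :=
  (vertex_mem_visited_forward_sr_zero hn (Nat.zero_lt_of_lt hn)).2 (Or.inl rfl)

lemma start_not_mem_visited_forward_singleton (hn : 1 < n) :
    vertex ε 0 true ∉ visited [(forward ε false : DihedralGroup n)] := by
  simp [vertex_mem_visited_forward_singleton hn (Nat.zero_lt_of_lt hn)]

/-- The positions, after an opening rotation, in which the player to move loses. The vertex
`vertex ε 0 true` is unvisited, and the parity says that, if both players keep rotating, the player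
to move is the one who enters it, or else the opponent closes the lap at `vertex ε 0 false`. -/
def RotationTrap (n : ℕ) (h : List (DihedralGroup n)) : Prop :=
  ∃ ε c b, JustRotated ε c b h ∧ vertex ε 0 true ∉ visited h ∧ (n + c + b.toNat) % 2 = 1

lemma winsInto_rotationTrap (H : AtFrontier ε c b h)
    (hlegal : LegalMove (gens n) h (forward ε b))
    (hrotate : c + 2 < n → JustRotated ε (c + 1) b (forward ε b :: h))
    (h₀ : vertex ε 0 true ∉ visited h) (hpar : (n + c + b.toNat) % 2 = 0) :
    WinsInto (gens n) (RotationTrap n) h := by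
  refine ⟨forward ε b, hlegal, ?_⟩
  have hlt := H.lt
  obtain hlast | hc : c + 2 = n ∨ c + 2 < n := by omega
  · obtain rfl : b = false := by
      cases b
      · rfl
      · simp only [Bool.toNat_true] at hpar
        omega
    refine Or.inl (H.closesCycle_forward_of_last hlast ?_)
    exact vertex_zero_false (ε := ε) ▸ one_mem_visited h
  · refine Or.inr ⟨ε, c + 1, b, hrotate hc, ?_, by omega⟩
    exact H.not_mem_visited_forward hc (by omega) (by simp) h₀

lemma JustRotated.forward_rotationTrap (H : JustRotated ε c b h) (hn : 3 ≤ n)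
    (h₀ : vertex ε 0 true ∉ visited h) (hpar : (n + c + b.toNat) % 2 = 1) :
    ¬ ClosesCycle h (forward ε b) ∧
      WinsInto (gens n) (RotationTrap n) (forward ε b :: h) := by
  have hlt := H.lt
  obtain hlast | hc : c + 2 = n ∨ c + 2 < n := by omega
  · obtain rfl : b = true := by
      cases b
      · simp only [Bool.toNat_false] at hpar
        omega
      · rfl
    have heval := H.eval_forward_of_last hlast
    refine ⟨by rwa [closesCycle_iff_eval_mem_visited, heval], sr 0,
      (legalMove_iff_of_head?_eq_forward hn rfl).2 (Or.inr rfl), Or.inl ?_⟩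
    rw [closesCycle_iff_eval_mem_visited, eval_cons, heval, vertex_mul_sr_zero, Bool.not_true,
      vertex_zero_false]
    exact one_mem_visited _
  · have H' := H.rotate hc
    refine ⟨H.not_closesCycle_forward hc, winsInto_rotationTrap H'.toAtFrontier
      ((H'.legalMove_iff hn).2 (Or.inl rfl)) H'.rotate ?_ (by omega)⟩
    exact H.not_mem_visited_forward hc (by omega) (by simp) h₀

lemma JustRotated.cross_rotationTrap (H : JustRotated ε c b h)
    (h₀ : vertex ε 0 true ∉ visited h) (hpar : (n + c + b.toNat) % 2 = 1) :
    WinsInto (gens n) (RotationTrap n) (sr 0 :: h) := by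
  by_cases hdiag : vertex ε c (!b) ∈ visited h
  · exact H.winsInto_cross _ hdiag
  · have H' := H.cross hdiag
    refine winsInto_rotationTrap H'.toAtFrontier (H'.legalMove_iff.2 (Or.inl rfl)) H'.rotate
      (H.start_not_mem_visited_cross h₀) ?_
    have hflip : (!b).toNat + b.toNat = 1 := by cases b <;> rfl
    omega

theorem isTrap_rotationTrap (hn : 3 ≤ n) : IsTrap (gens n) (RotationTrap n) := by
  rintro h ⟨ε, c, b, H, h₀, hpar⟩ m hm
  obtain rfl | rfl := (H.legalMove_iff hn).1 hm
  · exact H.forward_rotationTrap hn h₀ hpar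
  · exact ⟨H.not_closesCycle_cross, H.cross_rotationTrap h₀ hpar⟩

/-- The positions, after the opening move `s`, in which the player to move loses. As `n - c - 2`
columns lie ahead of column `c + 1`, the congruences are conditions on the number of these. -/
inductive CrossingTrap (n : ℕ) : List (DihedralGroup n) → Prop
  | opening (hmod : n % 3 = 2) : CrossingTrap n [sr 0]
  | fresh {ε : ℤˣ} {c : ℕ} {b : Bool} {h : List (DihedralGroup n)} (H : JustRotated ε c b h)
      (h₀ : vertex ε 0 true ∈ visited h) (hdiag : vertex ε c (!b) ∉ visited h)
      (hmod : n % 3 = (c + 1) % 3) : CrossingTrap n h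
  | diagonal {ε : ℤˣ} {c : ℕ} {b : Bool} {h : List (DihedralGroup n)} (H : JustRotated ε c b h)
      (h₀ : vertex ε 0 true ∈ visited h) (hdiag : vertex ε c (!b) ∈ visited h)
      (hmod : n % 3 ≠ (c + 2) % 3) : CrossingTrap n h
  | crossed {ε : ℤˣ} {c : ℕ} {b : Bool} {h : List (DihedralGroup n)} (H : JustCrossed ε c b h)
      (h₀ : vertex ε 0 true ∈ visited h) (hmod : n % 3 = c % 3) : CrossingTrap n h

lemma JustRotated.winsInto_crossingTrap_by_forward (H : JustRotated ε c b h) (hn : 3 ≤ n)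
    (h₀ : vertex ε 0 true ∈ visited h) (hmod : n % 3 = (c + 2) % 3) :
    WinsInto (gens n) (CrossingTrap n) h := by
  refine ⟨forward ε b, (H.legalMove_iff hn).2 (Or.inl rfl), ?_⟩
  have hlt := H.lt
  obtain hlast | hc : c + 2 = n ∨ c + 2 < n := by omega
  · exact Or.inl (H.closesCycle_forward_of_last hlast (vertex_zero_mem_visited h₀ b))
  · exact Or.inr (.fresh (H.rotate hc) (mem_visited_cons_of_mem h₀) (H.diagonal_rotate hc) hmod)

lemma JustRotated.winsInto_crossingTrap_by_cross (H : JustRotated ε c b h)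
    (h₀ : vertex ε 0 true ∈ visited h) (hdiag : vertex ε c (!b) ∉ visited h)
    (hmod : n % 3 = c % 3) : WinsInto (gens n) (CrossingTrap n) h := by
  have hlt := H.lt
  exact ⟨sr 0, (H.legalMove_iff (by omega)).2 (Or.inr rfl),
    Or.inr (.crossed (H.cross hdiag) (mem_visited_cons_of_mem h₀) hmod)⟩

lemma JustCrossed.winsInto_crossingTrap (H : JustCrossed ε c b h)
    (h₀ : vertex ε 0 true ∈ visited h) (hmod : n % 3 = (c + 1) % 3) :
    WinsInto (gens n) (CrossingTrap n) h := by
  have hlt := H.lt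
  refine ⟨forward ε b, H.legalMove_iff.2 (Or.inl rfl), Or.inr ?_⟩
  exact .diagonal (H.rotate (by omega)) (mem_visited_cons_of_mem h₀) H.diagonal_rotate (by omega)

lemma JustRotated.losesInto_crossingTrap_of_not_mem (H : JustRotated ε c b h)
    (h₀ : vertex ε 0 true ∈ visited h) (hdiag : vertex ε c (!b) ∉ visited h)
    (hmod : n % 3 = (c + 1) % 3) : LosesInto (gens n) (CrossingTrap n) h := by
  intro m hm
  have hlt := H.lt
  have hc : c + 2 < n := by omega
  have hn : 3 ≤ n := by omega
  obtain rfl | rfl := (H.legalMove_iff hn).1 hm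
  · exact ⟨H.not_closesCycle_forward hc, (H.rotate hc).winsInto_crossingTrap_by_cross
      (mem_visited_cons_of_mem h₀) (H.diagonal_rotate hc) hmod⟩
  · exact ⟨H.not_closesCycle_cross,
      (H.cross hdiag).winsInto_crossingTrap (mem_visited_cons_of_mem h₀) hmod⟩

lemma JustRotated.losesInto_crossingTrap_of_mem (H : JustRotated ε c b h)
    (h₀ : vertex ε 0 true ∈ visited h) (hdiag : vertex ε c (!b) ∈ visited h)
    (hmod : n % 3 ≠ (c + 2) % 3) : LosesInto (gens n) (CrossingTrap n) h := by
  intro m hm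
  have hlt := H.lt
  have hc : c + 2 < n := by omega
  have hn : 3 ≤ n := by omega
  obtain rfl | rfl := (H.legalMove_iff hn).1 hm
  · refine ⟨H.not_closesCycle_forward hc, ?_⟩
    have h₀' : vertex ε 0 true ∈ visited (forward ε b :: h) := mem_visited_cons_of_mem h₀
    obtain hmod' | hmod' : n % 3 = (c + 3) % 3 ∨ n % 3 = (c + 1) % 3 := by omega
    · exact (H.rotate hc).winsInto_crossingTrap_by_forward hn h₀' hmod'
    · exact (H.rotate hc).winsInto_crossingTrap_by_cross h₀' (H.diagonal_rotate hc) hmod'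
  · exact ⟨H.not_closesCycle_cross, H.winsInto_cross _ hdiag⟩

lemma JustCrossed.losesInto_crossingTrap (H : JustCrossed ε c b h)
    (h₀ : vertex ε 0 true ∈ visited h) (hmod : n % 3 = c % 3) :
    LosesInto (gens n) (CrossingTrap n) h := by
  intro m hm
  have hlt := H.lt
  have hc : c + 2 < n := by omega
  have hn : 3 ≤ n := by omega
  obtain rfl | rfl := H.legalMove_iff.1 hm
  · exact ⟨H.not_closesCycle_forward hc, (H.rotate hc).winsInto_crossingTrap_by_forward hn
      (mem_visited_cons_of_mem h₀) (by omega)⟩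
  · exact ⟨H.not_closesCycle_backward, H.winsInto_backward hn _⟩

theorem winsInto_rotationTrap_nil (hn : 1 < n) (hodd : Odd n) :
    WinsInto (gens n) (RotationTrap n) [] :=
  ⟨forward 1 false, (legalMove_nil_iff 1 false).2 (Or.inl rfl),
    Or.inr ⟨1, 0, false, justRotated_forward_singleton hn,
      start_not_mem_visited_forward_singleton hn, Nat.odd_iff.1 hodd⟩⟩

lemma winsInto_rotationTrap_forward (hn : 3 ≤ n) (heven : Even n) :
    WinsInto (gens n) (RotationTrap n) [forward ε false] := by
  have H := justRotated_forward_singleton (n := n) (ε := ε) (by omega)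
  exact winsInto_rotationTrap H.toAtFrontier ((H.legalMove_iff hn).2 (Or.inl rfl)) H.rotate
    (start_not_mem_visited_forward_singleton (by omega)) (Nat.even_iff.1 heven)

lemma losesInto_crossingTrap_sr_zero (hn : 3 ≤ n) (hmod : n % 3 = 2) :
    LosesInto (gens n) (CrossingTrap n) [sr 0] := by
  have hn₁ : 1 < n := by omega
  have hforward : ∀ ε, ¬ ClosesCycle [sr 0] (forward ε true : DihedralGroup n) ∧
      WinsInto (gens n) (CrossingTrap n) [forward ε true, sr 0] := fun ε =>
    ⟨not_closesCycle_sr_zero_forward hn₁,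
      (justRotated_forward_sr_zero hn₁).winsInto_crossingTrap_by_forward hn
        (start_mem_visited_forward_sr_zero hn₁) hmod⟩
  intro m hm
  obtain rfl | rfl := (legalMove_iff_of_head?_eq_sr_zero 1 true rfl).1 hm
  · exact hforward 1
  · exact hforward (-1)

theorem isTrap_crossingTrap (hn : 3 ≤ n) : IsTrap (gens n) (CrossingTrap n)
  | _, .opening hmod => losesInto_crossingTrap_sr_zero hn hmod
  | _, .fresh H h₀ hdiag hmod => H.losesInto_crossingTrap_of_not_mem h₀ hdiag hmod
  | _, .diagonal H h₀ hdiag hmod => H.losesInto_crossingTrap_of_mem h₀ hdiag hmod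
  | _, .crossed H h₀ hmod => H.losesInto_crossingTrap h₀ hmod

theorem winsInto_crossingTrap_nil (hmod : n % 3 = 2) :
    WinsInto (gens n) (CrossingTrap n) [] :=
  ⟨sr 0, (legalMove_nil_iff 1 false).2 (Or.inr (Or.inr rfl)), Or.inr (.opening hmod)⟩

lemma winsInto_crossingTrap_sr_zero (hn : 1 < n) (hmod : n % 3 ≠ 2) :
    WinsInto (gens n) (CrossingTrap n) [sr 0] :=
  ⟨forward 1 true, (legalMove_iff_of_head?_eq_sr_zero 1 true rfl).2 (Or.inl rfl),
    Or.inr (.diagonal (justRotated_forward_sr_zero hn) (start_mem_visited_forward_sr_zero hn)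
      (start_mem_visited_forward_sr_zero hn) hmod)⟩

theorem losesInto_rotationTrap_or_crossingTrap_nil (hn : 3 ≤ n) (heven : Even n)
    (hmod : n % 3 ≠ 2) :
    LosesInto (gens n) (fun h => RotationTrap n h ∨ CrossingTrap n h) [] := by
  intro m hm
  obtain rfl | rfl | rfl := (legalMove_nil_iff 1 false).1 hm
  · exact ⟨not_closesCycle_nil_forward (by omega),
      (winsInto_rotationTrap_forward hn heven).mono fun _ => Or.inl⟩
  · exact ⟨not_closesCycle_nil_forward (by omega),
      (winsInto_rotationTrap_forward hn heven).mono fun _ => Or.inl⟩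
  · exact ⟨not_closesCycle_nil_sr_zero,
      (winsInto_crossingTrap_sr_zero (by omega) hmod).mono fun _ => Or.inr⟩

end Prism

end RelatorGames

open RelatorGames in
/-- In `REL(D_n, {r,s})` with `n ≥ 3`: Player 1 has a winning strategy
if `n` is odd or `n ≡ 2 (mod 6)`; Player 2 has one if `n` is even and `n ≢ 2 (mod 6)`. -/
theorem rel_dihedral (n : ℕ) (hn : 3 ≤ n) :
    ((Odd n ∨ n % 6 = 2) →
      FirstWinsREL ({DihedralGroup.r 1, DihedralGroup.sr 0} : Set (DihedralGroup n))) ∧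
    ((Even n ∧ n % 6 ≠ 2) →
      SecondWinsREL ({DihedralGroup.r 1, DihedralGroup.sr 0} : Set (DihedralGroup n))) := by
  have : NeZero n := ⟨by omega⟩
  refine ⟨fun h => ?_, fun ⟨heven, hmod⟩ => ?_⟩
  · rcases h with hodd | hmod
    · exact firstWinsREL_of_winsInto (isTrap_rotationTrap hn)
        (winsInto_rotationTrap_nil (by omega) hodd)
    · exact firstWinsREL_of_winsInto (isTrap_crossingTrap hn)
        (winsInto_crossingTrap_nil (by omega))
  · have hmod₃ : n % 3 ≠ 2 := by
      have := Nat.even_iff.1 heven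
      omega
    exact secondWinsREL_of_losesInto ((isTrap_rotationTrap hn).or (isTrap_crossingTrap hn))
      (losesInto_rotationTrap_or_crossingTrap_nil hn heven hmod₃)
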